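/- arXiv:2012.11493 — 6 statements merged into one kernel-verified Lean document; each statement's English description precedes it below -/
import Mathlib

section
/- Let α ∈ (−1,1) and let w : (α,1) → ℝ be integrable. Suppose that for each nonnegative integer k, (r_{l,k})_{l≥0} is a sequence of real polynomials such that ∫_α^1 r_{l,k}(z) r_{l',k}(z) (1−z²)^k w(z) dz = 0 whenever l ≠ l'. Define, for integers 0 ≤ k ≤ n and admissible i, the function Q_{n,k,i}(θ,z) := r_{n−k,k}(z) · (1−z²)^{k/2} · Y_{k,i}(θ) on [0,2π] × (α,1). Then for any two index triples (n,k,i) ≠ (m,j,h) with 0 ≤ k ≤ n, 0 ≤ j ≤ m, i ∈ {0} if k = 0 and i ∈ {0,1} if k ≥ 1, h ∈ {0} if j = 0 and h ∈ {0,1} if j ≥ 1, one has ∫_α^1 ∫_0^{2π} Q_{n,k,i}(θ,z) · Q_{m,j,h}(θ,z) · w(z) dθ dz = 0. -/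
open MeasureTheory Real Polynomial

/-- The circular harmonics: `Y 0 _ θ = √2/2`, `Y k 0 θ = cos (k θ)`, `Y k 1 θ = sin (k θ)`. -/
noncomputable def circY (k i : ℕ) (θ : ℝ) : ℝ :=
  if k = 0 then Real.sqrt 2 / 2
  else if i = 0 then Real.cos (k * θ) else Real.sin (k * θ)

/-! In the coordinates `(θ, z)` each basis function is a function of `z` times a circular harmonic
in `θ`, so the inner product factors into an integral over `z` and an integral over the circle.
Writing `sin x = cos (x - π / 2)` makes every harmonic a multiple of a phase-shifted cosine, and a
single product-to-sum formula shows that distinct harmonics are orthogonal. For equal harmonics the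
two powers `(1 - z ^ 2) ^ (k / 2)` multiply to the weight `(1 - z ^ 2) ^ k`, for which the functions
of `z` are orthogonal by hypothesis. -/

section SeparationOfVariables

variable {𝕜 X Y : Type*} [RCLike 𝕜] [MeasurableSpace X] [MeasurableSpace Y]

lemma integral_integral_separated_mul (μ : Measure X) (ν : Measure Y) (a b w : X → 𝕜)
    (f g : Y → 𝕜) :
    ∫ x, (∫ y, (a x * f y) * (b x * g y) ∂ν) * w x ∂μ =
      (∫ x, a x * b x * w x ∂μ) * ∫ y, f y * g y ∂ν := by
  simp only [mul_mul_mul_comm, integral_const_mul, mul_right_comm _ (∫ y, f y * g y ∂ν),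
    integral_mul_const]

end SeparationOfVariables

lemma integral_cos_int_mul_add {a : ℤ} (ha : a ≠ 0) (φ t : ℝ) :
    ∫ θ in t..t + 2 * π, cos (a * θ + φ) = 0 := by
  have periodic : sin (a * (t + 2 * π) + φ) = sin (a * t + φ) := by
    rw [mul_add, add_right_comm, sin_add_int_mul_two_pi]
  rw [intervalIntegral.integral_comp_mul_add cos (Int.cast_ne_zero.mpr ha), integral_cos, periodic,
    sub_self, smul_zero]

lemma integral_cos_int_mul_add_mul_cos (a b : ℤ) (φ ψ t : ℝ) :
    ∫ θ in t..t + 2 * π, cos (a * θ + φ) * cos (b * θ + ψ) =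
      ((∫ θ in t..t + 2 * π, cos ((a - b : ℤ) * θ + (φ - ψ))) +
        ∫ θ in t..t + 2 * π, cos ((a + b : ℤ) * θ + (φ + ψ))) / 2 := by
  have product_to_sum (θ : ℝ) : cos (a * θ + φ) * cos (b * θ + ψ) =
      (cos ((a - b : ℤ) * θ + (φ - ψ)) + cos ((a + b : ℤ) * θ + (φ + ψ))) / 2 := by
    rw [eq_div_iff two_ne_zero, mul_comm, ← mul_assoc, two_mul_cos_mul_cos]
    push_cast
    ring_nf
  simp only [product_to_sum, intervalIntegral.integral_div]
  rw [intervalIntegral.integral_add] <;>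
    exact Continuous.intervalIntegrable (by fun_prop) _ _

lemma integral_cos_int_mul_add_mul_cos_of_ne {a b : ℤ} (hsub : a ≠ b) (hadd : a + b ≠ 0)
    (φ ψ t : ℝ) : ∫ θ in t..t + 2 * π, cos (a * θ + φ) * cos (b * θ + ψ) = 0 := by
  rw [integral_cos_int_mul_add_mul_cos, integral_cos_int_mul_add (sub_ne_zero.mpr hsub),
    integral_cos_int_mul_add hadd, add_zero, zero_div]

lemma integral_cos_int_mul_add_mul_cos_self {a : ℤ} (ha : a ≠ 0) (φ ψ t : ℝ) :
    ∫ θ in t..t + 2 * π, cos (a * θ + φ) * cos (a * θ + ψ) = π * cos (φ - ψ) := by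
  rw [integral_cos_int_mul_add_mul_cos, integral_cos_int_mul_add (by omega : a + a ≠ 0)]
  simp [mul_div_right_comm]

lemma circY_eq_const_mul_cos {k i : ℕ} (hi : i ≤ 1) (hi0 : k = 0 → i = 0) :
    ∃ c : ℝ, ∀ θ, circY k i θ = c * cos (k * θ + -(i * (π / 2))) := by
  rcases eq_or_ne k 0 with rfl | hk
  · exact ⟨√2 / 2, fun θ => by simp [circY, hi0 rfl]⟩
  · refine ⟨1, fun θ => ?_⟩
    interval_cases i <;> simp [circY, hk, ← sub_eq_add_neg, cos_sub_pi_div_two]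

lemma integral_circY_mul_circY_eq_zero {k i j h : ℕ} (hi : i ≤ 1) (hi0 : k = 0 → i = 0)
    (hh : h ≤ 1) (hh0 : j = 0 → h = 0) (hne : (k, i) ≠ (j, h)) (t : ℝ) :
    ∫ θ in t..t + 2 * π, circY k i θ * circY j h θ = 0 := by
  obtain ⟨c, hc⟩ := circY_eq_const_mul_cos hi hi0
  obtain ⟨d, hd⟩ := circY_eq_const_mul_cos hh hh0
  suffices ∫ θ in t..t + 2 * π,
      cos ((k : ℤ) * θ + -(i * (π / 2))) * cos ((j : ℤ) * θ + -(h * (π / 2))) = 0 by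
    simp only [Int.cast_natCast] at this
    simp only [hc, hd, mul_mul_mul_comm c, intervalIntegral.integral_const_mul, this, mul_zero]
  rcases eq_or_ne k j with rfl | hkj
  · have hih : i ≠ h := fun e => hne (by rw [e])
    have hk : (k : ℤ) ≠ 0 := by omega
    have quarter_turn : cos (-(i * (π / 2)) - -(h * (π / 2))) = 0 := by
      interval_cases i <;> interval_cases h <;> simp at hih ⊢
    rw [integral_cos_int_mul_add_mul_cos_self hk, quarter_turn, mul_zero]
  · exact integral_cos_int_mul_add_mul_cos_of_ne (by omega) (by omega) _ _ t

lemma rpow_half_mul_rpow_half {x : ℝ} (hx : 0 ≤ x) (s : ℝ) :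
    x ^ (s / 2) * x ^ (s / 2) = x ^ s := by
  rw [rpow_div_two_eq_sqrt s hx, ← mul_rpow (sqrt_nonneg x) (sqrt_nonneg x), mul_self_sqrt hx]

theorem sphericalCap_OP_orthogonal_general (μ : Measure ℝ)
    (hμ : ∀ᵐ z ∂μ, z ∈ Set.Icc (-1 : ℝ) 1) (w : ℝ → ℝ) (r : ℕ → ℕ → ℝ → ℝ)
    (hr : ∀ k l l', l ≠ l' → ∫ z, r l k z * r l' k z * (1 - z ^ 2) ^ k * w z ∂μ = 0)
    {l k i l' j h : ℕ} (hi : i ≤ 1) (hi0 : k = 0 → i = 0) (hh : h ≤ 1) (hh0 : j = 0 → h = 0)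
    (hne : (l, k, i) ≠ (l', j, h)) :
    ∫ z, (∫ θ in (0 : ℝ)..(2 * π),
        (r l k z * (1 - z ^ 2) ^ ((k : ℝ) / 2) * circY k i θ) *
        (r l' j z * (1 - z ^ 2) ^ ((j : ℝ) / 2) * circY j h θ)) * w z ∂μ = 0 := by
  simp only [intervalIntegral.integral_of_le two_pi_pos.le]
  rw [integral_integral_separated_mul, ← intervalIntegral.integral_of_le two_pi_pos.le]
  rcases eq_or_ne (k, i) (j, h) with heq | hki
  · obtain ⟨rfl, rfl⟩ := Prod.mk.inj heq
    have hl : l ≠ l' := fun e => hne (by rw [e])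
    refine mul_eq_zero_of_left ((integral_congr_ae ?_).trans (hr k l l' hl)) _
    filter_upwards [hμ] with z hz
    have hz0 : 0 ≤ 1 - z ^ 2 := sub_nonneg.mpr ((sq_le_one_iff_abs_le_one z).mpr (abs_le.mpr hz))
    rw [mul_mul_mul_comm, rpow_half_mul_rpow_half hz0, rpow_natCast]
  · refine mul_eq_zero_of_right _ ?_
    simpa only [zero_add] using integral_circY_mul_circY_eq_zero hi hi0 hh hh0 hki 0

/-- Orthogonality of the spherical-cap orthogonal polynomials
 built from 1D polynomials 
orthogonal with respect to  on . -/
theorem sphericalCap_OP_orthogonal (α : ℝ) (hα : α ∈ Set.Ioo (-1 : ℝ) 1)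
    (w : ℝ → ℝ) (hw : IntegrableOn w (Set.Ioo α 1))
    (r : ℕ → ℕ → Polynomial ℝ)
    (hr : ∀ k l l', l ≠ l' →
      ∫ z in α..1, (r l k).eval z * (r l' k).eval z * (1 - z ^ 2) ^ k * w z = 0)
    (n k i m j h : ℕ) (hkn : k ≤ n) (hjm : j ≤ m)
    (hi : i ≤ 1) (hi0 : k = 0 → i = 0) (hh : h ≤ 1) (hh0 : j = 0 → h = 0)
    (hne : (n, k, i) ≠ (m, j, h)) :
    ∫ z in α..1,
      (∫ θ in (0:ℝ)..(2 * π),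
        ((r (n - k) k).eval z * (1 - z ^ 2) ^ ((k : ℝ) / 2) * circY k i θ) *
        ((r (m - j) j).eval z * (1 - z ^ 2) ^ ((j : ℝ) / 2) * circY j h θ)) * w z = 0 := by
  simp only [intervalIntegral.integral_of_le hα.2.le] at hr ⊢
  exact sphericalCap_OP_orthogonal_general _
    (ae_restrict_of_forall_mem measurableSet_Ioc fun z hz => ⟨(hα.1.trans hz.1).le, hz.2⟩)
    w (fun l k z => (r l k).eval z) hr hi hi0 hh hh0 (by grind)
end

section
/- Let α ∈ (−1,1) and a ≥ 0 be real. Suppose that for each nonnegative integer k, (R_{k,l})_{l≥0} is a sequence of real polynomials with deg R_{k,l} = l and ∫_α^1 R_{k,l}(z) p(z) (z−α)^a (1−z²)^k dz = 0 for every polynomial p with deg p < l. Define Q_{n,k,i}(θ,z) := R_{k,n−k}(z) · (1−z²)^{k/2} · Y_{k,i}(θ). Then for index triples (n,k,i) and (m,j,h) (with 0 ≤ k ≤ n, 0 ≤ j ≤ m and admissible i, h), if h ≠ i, or j ∉ {k−1, k+1}, or |m − n| ≥ 2, one has ∫_α^1 ∫_0^{2π} √(1−z²) cos θ · Q_{n,k,i}(θ,z)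 · Q_{m,j,h}(θ,z) · (z−α)^a dθ dz = 0. (This is the sparsity of the Jacobi operator for multiplication by x = ρ(z) cos θ on the spherical cap.) -/
open MeasureTheory Real Polynomial

/-!
The coupling integral is the product of an angular and a radial integral. Up to a constant, the
circular harmonics are the phase-shifted cosines `cos (kθ - iπ/2)`, so the angular integrand is a
sum of four cosines of frequencies `k ± j ± 1`: its integral vanishes unless `h = i` and
`|j - k| = 1`. When `j = k + 1`, the factors `ρ · ρ ^ k · ρ ^ (k + 1)` combine into
`(1 - z²) ^ (k + 1)`, which is the weight of order `k + 1`, and also `1 - z²` times the weight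
of order `k`. Orthogonality of order `k + 1` kills the radial integral when `m > n + 1`, and
orthogonality of order `k`, tested against `(1 - X²) R_{k+1,m-k-1}`, kills it when `m < n - 1`.
The case `k = j + 1` is symmetric.
-/

lemma integral_cos_int_mul_sub_eq_zero {c : ℤ} {φ : ℝ} (h : c ≠ 0 ∨ cos φ = 0) :
    ∫ θ in (0 : ℝ)..(2 * π), cos (c * θ - φ) = 0 := by
  rcases eq_or_ne c 0 with rfl | hc
  · simp [h.resolve_left (not_not_intro rfl)]
  · have endpoint : sin (c * (2 * π) - φ) = sin (c * 0 - φ) := by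
      rw [mul_zero, sub_eq_neg_add, sin_add_int_mul_two_pi, zero_sub]
    rw [intervalIntegral.integral_comp_mul_sub cos (Int.cast_ne_zero.mpr hc), integral_cos,
      endpoint, sub_self, smul_zero]

lemma integral_cos_mul_cos_int_mul_sub_eq_zero {c : ℤ} {φ : ℝ} (h : |c| ≠ 1 ∨ cos φ = 0) :
    ∫ θ in (0 : ℝ)..(2 * π), cos θ * cos (c * θ - φ) = 0 := by
  have expand (θ : ℝ) : cos θ * cos (c * θ - φ) =
      2⁻¹ * (cos ((c - 1 : ℤ) * θ - φ) + cos ((c + 1 : ℤ) * θ - φ)) := by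
    rw [eq_inv_mul_iff_mul_eq₀ two_ne_zero, ← mul_assoc, mul_right_comm, two_mul_cos_mul_cos]
    push_cast
    ring_nf
  simp only [expand, intervalIntegral.integral_const_mul]
  rw [intervalIntegral.integral_add (Continuous.intervalIntegrable (by fun_prop) _ _)
      (Continuous.intervalIntegrable (by fun_prop) _ _),
    integral_cos_int_mul_sub_eq_zero (h.imp_left (by grind)),
    integral_cos_int_mul_sub_eq_zero (h.imp_left (by grind)), add_zero, mul_zero]

lemma integral_cos_mul_cos_mul_cos_eq_zero {k j : ℤ} {φ ψ : ℝ}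
    (hsub : |k - j| ≠ 1 ∨ cos (φ - ψ) = 0) (hadd : |k + j| ≠ 1 ∨ cos (φ + ψ) = 0) :
    ∫ θ in (0 : ℝ)..(2 * π), cos θ * cos (k * θ - φ) * cos (j * θ - ψ) = 0 := by
  have expand (θ : ℝ) : cos θ * cos (k * θ - φ) * cos (j * θ - ψ) =
      2⁻¹ * (cos θ * cos ((k - j : ℤ) * θ - (φ - ψ)) +
        cos θ * cos ((k + j : ℤ) * θ - (φ + ψ))) := by
    have product := two_mul_cos_mul_cos (k * θ - φ) (j * θ - ψ)
    rw [sub_sub_sub_comm, sub_add_sub_comm, ← sub_mul, ← add_mul] at product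
    push_cast
    linear_combination cos θ / 2 * product
  simp only [expand, intervalIntegral.integral_const_mul]
  rw [intervalIntegral.integral_add (Continuous.intervalIntegrable (by fun_prop) _ _)
      (Continuous.intervalIntegrable (by fun_prop) _ _),
    integral_cos_mul_cos_int_mul_sub_eq_zero hsub, integral_cos_mul_cos_int_mul_sub_eq_zero hadd,
    add_zero, mul_zero]

lemma circY_eq_mul_cos {k i : ℕ} (hi : i ≤ 1) (hi0 : k = 0 → i = 0) (θ : ℝ) :
    circY k i θ = (if k = 0 then √2 / 2 else 1) * cos (k * θ - i * (π / 2)) := by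
  rcases eq_or_ne k 0 with rfl | hk
  · simp [circY, hi0 rfl]
  · interval_cases i <;> simp [circY, hk, cos_sub_pi_div_two]

lemma integral_cos_mul_circY_mul_circY_eq_zero {k i j h : ℕ}
    (hi : i ≤ 1) (hi0 : k = 0 → i = 0) (hh : h ≤ 1) (hh0 : j = 0 → h = 0)
    (hne : h ≠ i ∨ (j ≠ k + 1 ∧ k ≠ j + 1)) :
    ∫ θ in (0 : ℝ)..(2 * π), cos θ * circY k i θ * circY j h θ = 0 := by
  have frequencies (hjk : j ≠ k + 1 ∧ k ≠ j + 1) : |(k : ℤ) - j| ≠ 1 ∧ |(k : ℤ) + j| ≠ 1 := by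
    grind
  have phases (hhi : h ≠ i) :
      cos (i * (π / 2) - h * (π / 2)) = 0 ∧ cos (i * (π / 2) + h * (π / 2)) = 0 := by
    interval_cases i <;> interval_cases h <;> simp_all
  have factor (θ : ℝ) : cos θ * circY k i θ * circY j h θ =
      ((if k = 0 then √2 / 2 else 1) * (if j = 0 then √2 / 2 else 1)) *
        (cos θ * cos ((k : ℤ) * θ - i * (π / 2)) * cos ((j : ℤ) * θ - h * (π / 2))) := by
    rw [circY_eq_mul_cos hi hi0, circY_eq_mul_cos hh hh0]
    push_cast
    ring
  simp only [factor, intervalIntegral.integral_const_mul]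
  rw [integral_cos_mul_cos_mul_cos_eq_zero
    (hne.symm.imp (fun hjk ↦ (frequencies hjk).1) fun hhi ↦ (phases hhi).1)
    (hne.symm.imp (fun hjk ↦ (frequencies hjk).2) fun hhi ↦ (phases hhi).2), mul_zero]

/-- `P` is orthogonal to all polynomials of degree less than `l`, for the weight `w` on the
interval from `α` to `β`. Neither positivity nor integrability of `w` is built in. -/
def OrthogonalToDegreeLT (α β : ℝ) (w : ℝ → ℝ) (l : ℕ) (P : ℝ[X]) : Prop :=
  ∀ p : ℝ[X], p.degree < l → ∫ z in α..β, P.eval z * p.eval z * w z = 0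

lemma OrthogonalToDegreeLT.integral_mul_mul_eq_zero {α β : ℝ} {w : ℝ → ℝ} {P Q u : ℝ[X]}
    {s t d : ℕ}
    (hP : OrthogonalToDegreeLT α β w s P)
    (hQ : OrthogonalToDegreeLT α β (fun z ↦ w z * u.eval z) t Q)
    (hPdeg : P.degree ≤ s) (hQdeg : Q.degree ≤ t) (hudeg : u.degree ≤ d)
    (hst : s < t ∨ t + d < s) :
    ∫ z in α..β, P.eval z * Q.eval z * (w z * u.eval z) = 0 := by
  rcases hst with hst | hst
  · have hPt : P.degree < t := hPdeg.trans_lt (by exact_mod_cast hst)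
    simpa only [mul_comm (Q.eval _)] using hQ P hPt
  · have hQus : (Q * u).degree < s :=
      (degree_mul_le_of_le hQdeg hudeg).trans_lt (by exact_mod_cast hst)
    simpa only [eval_mul, mul_assoc, mul_left_comm, mul_comm] using hP (Q * u) hQus

/-- The radial part `z ↦ R_{k,n-k}(z) ρ(z) ^ k` of the harmonic `Q_{n,k,i}`. -/
noncomputable def capRadial (R : ℕ → ℕ → ℝ[X]) (n k : ℕ) (z : ℝ) : ℝ :=
  (R k (n - k)).eval z * (1 - z ^ 2) ^ ((k : ℝ) / 2)

@[fun_prop]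
lemma continuous_capRadial (R : ℕ → ℕ → ℝ[X]) (n k : ℕ) : Continuous (capRadial R n k) :=
  (R k (n - k)).continuous.mul
    ((by fun_prop : Continuous fun z : ℝ ↦ 1 - z ^ 2).rpow_const fun _ ↦ .inr (by positivity))

lemma sqrt_mul_rpow_half_mul_rpow_half_succ {t : ℝ} (ht : 0 ≤ t) (k : ℕ) :
    √t * t ^ ((k : ℝ) / 2) * t ^ (((k + 1 : ℕ) : ℝ) / 2) = t ^ (k + 1) := by
  rw [rpow_div_two_eq_sqrt _ ht, rpow_div_two_eq_sqrt _ ht, rpow_natCast, rpow_natCast]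
  calc √t * √t ^ k * √t ^ (k + 1) = (√t ^ 2) ^ (k + 1) := by ring
    _ = t ^ (k + 1) := by rw [sq_sqrt ht]

lemma sqrt_mul_capRadial_mul_capRadial_succ (R : ℕ → ℕ → ℝ[X]) (n m k : ℕ) {z : ℝ}
    (hz : z ∈ Set.Icc (-1 : ℝ) 1) :
    √(1 - z ^ 2) * capRadial R n k z * capRadial R m (k + 1) z =
      (R k (n - k)).eval z * (R (k + 1) (m - (k + 1))).eval z * (1 - z ^ 2) ^ (k + 1) := by
  have ht : 0 ≤ 1 - z ^ 2 := by nlinarith [hz.1, hz.2]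
  rw [← sqrt_mul_rpow_half_mul_rpow_half_succ ht, capRadial, capRadial]
  ring

lemma integral_sqrt_mul_capRadial_mul_capRadial_succ_eq_zero {α β : ℝ} {w : ℝ → ℝ}
    {R : ℕ → ℕ → ℝ[X]} {n m k : ℕ}
    (hα : α ∈ Set.Icc (-1 : ℝ) 1) (hβ : β ∈ Set.Icc (-1 : ℝ) 1)
    (hdeg : ∀ k l, (R k l).degree ≤ l)
    (horth : ∀ k l, OrthogonalToDegreeLT α β (fun z ↦ w z * (1 - z ^ 2) ^ k) l (R k l))
    (hkn : k ≤ n) (hkm : k + 1 ≤ m) (hnm : n + 2 ≤ m ∨ m + 2 ≤ n) :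
    ∫ z in α..β, √(1 - z ^ 2) * capRadial R n k z * capRadial R m (k + 1) z * w z = 0 := by
  have hudeg : (1 - X ^ 2 : ℝ[X]).degree ≤ (2 : ℕ) := by compute_degree!
  have horth_succ : OrthogonalToDegreeLT α β
      (fun z ↦ w z * (1 - z ^ 2) ^ k * (1 - X ^ 2 : ℝ[X]).eval z)
      (m - (k + 1)) (R (k + 1) (m - (k + 1))) := by
    simpa [mul_assoc, ← pow_succ] using horth (k + 1) (m - (k + 1))
  rw [← (horth k (n - k)).integral_mul_mul_eq_zero horth_succ (hdeg _ _) (hdeg _ _) hudeg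
    (by omega)]
  refine intervalIntegral.integral_congr fun z hz ↦ ?_
  simp only [sqrt_mul_capRadial_mul_capRadial_succ R n m k (Set.uIcc_subset_Icc hα hβ hz),
    eval_sub, eval_one, eval_pow, eval_X]
  ring

/-- The harmonic `Q_{n,k,i}(θ,z) = R_{k,n-k}(z) ρ(z) ^ k Y_{k,i}(θ)` on the spherical cap; the
difference `n - k` is truncated, so only `k ≤ n` is meaningful. -/
noncomputable def capHarmonic (R : ℕ → ℕ → ℝ[X]) (n k i : ℕ) (θ z : ℝ) : ℝ :=
  capRadial R n k z * circY k i θ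

lemma integral_capHarmonic_mul_capHarmonic (R : ℕ → ℕ → ℝ[X]) (w : ℝ → ℝ)
    (n k i m j h : ℕ) (z : ℝ) :
    ∫ θ in (0 : ℝ)..(2 * π),
      √(1 - z ^ 2) * cos θ * capHarmonic R n k i θ z * capHarmonic R m j h θ z * w z =
    (√(1 - z ^ 2) * capRadial R n k z * capRadial R m j z * w z) *
      ∫ θ in (0 : ℝ)..(2 * π), cos θ * circY k i θ * circY j h θ := by
  rw [← intervalIntegral.integral_const_mul]
  refine intervalIntegral.integral_congr fun θ _ ↦ ?_
  simp only [capHarmonic]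
  ring

theorem sphericalCap_jacobiX_sparse_general {α β : ℝ} {w : ℝ → ℝ} {R : ℕ → ℕ → ℝ[X]}
    (hα : α ∈ Set.Icc (-1 : ℝ) 1) (hβ : β ∈ Set.Icc (-1 : ℝ) 1)
    (hw : IntervalIntegrable w volume α β)
    (hdeg : ∀ k l, (R k l).degree ≤ l)
    (horth : ∀ k l, OrthogonalToDegreeLT α β (fun z ↦ w z * (1 - z ^ 2) ^ k) l (R k l))
    {n k i m j h : ℕ} (hkn : k ≤ n) (hjm : j ≤ m)
    (hi : i ≤ 1) (hi0 : k = 0 → i = 0) (hh : h ≤ 1) (hh0 : j = 0 → h = 0)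
    (hcond : h ≠ i ∨ ((j : ℤ) ≠ (k : ℤ) - 1 ∧ (j : ℤ) ≠ (k : ℤ) + 1) ∨
      2 ≤ |(m : ℤ) - (n : ℤ)|) :
    IntervalIntegrable (fun z ↦ ∫ θ in (0 : ℝ)..(2 * π),
      √(1 - z ^ 2) * cos θ * capHarmonic R n k i θ z * capHarmonic R m j h θ z * w z)
      volume α β ∧
    ∫ z in α..β, ∫ θ in (0 : ℝ)..(2 * π),
      √(1 - z ^ 2) * cos θ * capHarmonic R n k i θ z * capHarmonic R m j h θ z * w z = 0 := by
  simp only [integral_capHarmonic_mul_capHarmonic]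
  constructor
  · refine (hw.continuousOn_mul (Continuous.continuousOn ?_)).mul_const _
    fun_prop
  rw [intervalIntegral.integral_mul_const]
  by_cases hangular : h ≠ i ∨ (j ≠ k + 1 ∧ k ≠ j + 1)
  · rw [integral_cos_mul_circY_mul_circY_eq_zero hi hi0 hh hh0 hangular, mul_zero]
  obtain ⟨hadj, hnm⟩ : (j = k + 1 ∨ k = j + 1) ∧ (n + 2 ≤ m ∨ m + 2 ≤ n) := by grind
  refine mul_eq_zero_of_left ?_ _
  rcases hadj with rfl | rfl
  · exact integral_sqrt_mul_capRadial_mul_capRadial_succ_eq_zero hα hβ hdeg horth hkn hjm hnm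
  · simp only [mul_right_comm √_ (capRadial R n (j + 1) _)]
    exact integral_sqrt_mul_capRadial_mul_capRadial_succ_eq_zero hα hβ hdeg horth hjm hkn
      hnm.symm

/-- Sparsity of the Jacobi operator for multiplication by x = ρ(z) cos θ on the spherical cap: the coupling integral vanishes unless h = i, j ∈ {k−1, k+1} and |m − n| ≤ 1. -/
theorem sphericalCap_jacobiX_sparse (α a : ℝ) (hα : α ∈ Set.Ioo (-1 : ℝ) 1) (ha : 0 ≤ a)
    (R : ℕ → ℕ → Polynomial ℝ)
    (hdeg : ∀ k l : ℕ, (R k l).degree = l)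
    (horth : ∀ (k l : ℕ) (p : Polynomial ℝ), p.degree < (l : WithBot ℕ) →
      ∫ x in α..1, (R k l).eval x * p.eval x * (x - α) ^ a * (1 - x ^ 2) ^ k = 0)
    (n k i m j h : ℕ) (hkn : k ≤ n) (hjm : j ≤ m)
    (hi : i ≤ 1) (hi0 : k = 0 → i = 0) (hh : h ≤ 1) (hh0 : j = 0 → h = 0)
    (hcond : h ≠ i ∨ ((j : ℤ) ≠ (k : ℤ) - 1 ∧ (j : ℤ) ≠ (k : ℤ) + 1) ∨ 2 ≤ |(m : ℤ) - (n : ℤ)|) :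
    ∫ z in α..1, ∫ θ in (0:ℝ)..(2 * π),
      Real.sqrt (1 - z ^ 2) * Real.cos θ *
      ((R k (n - k)).eval z * (1 - z ^ 2) ^ ((k : ℝ) / 2) * circY k i θ) *
      ((R j (m - j)).eval z * (1 - z ^ 2) ^ ((j : ℝ) / 2) * circY j h θ) *
      (z - α) ^ a = 0 := by
  have hw : Continuous fun z : ℝ ↦ (z - α) ^ a :=
    (continuous_id.sub continuous_const).rpow_const fun _ ↦ .inr ha
  exact (sphericalCap_jacobiX_sparse_general (Set.Ioo_subset_Icc_self hα) (by simp)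
    (hw.intervalIntegrable α 1) (fun k l ↦ (hdeg k l).le)
    (fun k l p hp ↦ by simpa only [mul_assoc] using horth k l p hp)
    hkn hjm hi hi0 hh hh0 hcond).2
end

section
/- Fix α ∈ (−1,1), a real number a ≥ 0 and an integer k ≥ 0. Let R be a real polynomial of degree n that is orthogonal of degree n for the weight (x−α)^a (1−x²)^k on (α,1). Then for every real polynomial q with deg q ≤ n − 2, ∫_α^1 R'(x) q'(x) (x−α)^{a+1} (1−x²)^{k+1} dx = 0. (Consequently, d/dx[(x−α)^{a+1}(1−x²)^{k+1} R'(x)] expanded against the weight (x−α)^a(1−x²)^k has nonzero coefficients only against orthogonal polynomials of degrees n−1, n, n+1.) -/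
open MeasureTheory Real Polynomial

/-!
The weight `w = (x - α)^a (1 - x²)^k` satisfies a Pearson equation `(σ w)' = τ w`, where
`σ = (x - α)(1 - x²)` has degree `3`, `τ` has degree at most `2`, and `σ w` vanishes at the
endpoints. For a polynomial `g`, integration by parts therefore moves the derivative off `R` in
`∫ R' g σ w`, leaving `-∫ R (σ g' + τ g) w`. Since `σ g' + τ g` has degree at most `deg g + 2`,
it is orthogonal to `R` when `g = q'`.
-/

section Degree

variable {A : Type*} [Semiring A]

lemma degree_derivative_add_one_le (p : A[X]) : (derivative p).degree + 1 ≤ p.degree := by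
  rcases eq_or_ne p 0 with rfl | hp
  · simp
  · exact Nat.WithBot.add_one_le_of_lt (degree_derivative_lt hp)

lemma degree_mul_derivative_add_mul_le {σ τ : A[X]} {d : WithBot ℕ} (hσ : σ.degree ≤ d + 1)
    (hτ : τ.degree ≤ d) (g : A[X]) : (σ * derivative g + τ * g).degree ≤ g.degree + d := by
  refine (degree_add_le _ _).trans (max_le ?_ ?_)
  · calc (σ * derivative g).degree
        ≤ (d + 1) + (derivative g).degree := degree_mul_le_of_le hσ le_rfl
      _ = ((derivative g).degree + 1) + d := by abel
      _ ≤ g.degree + d := by gcongr; exact degree_derivative_add_one_le g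
  · calc (τ * g).degree ≤ d + g.degree := degree_mul_le_of_le hτ le_rfl
      _ = g.degree + d := add_comm _ _

lemma degree_derivative_add_lt {q : A[X]} {d n : ℕ} (hq : q.degree + d ≤ n) :
    (derivative q).degree + d < n := by
  rcases eq_or_ne q 0 with rfl | hq₀
  · simp
  · calc (derivative q).degree + d
        < q.degree + d :=
          WithBot.add_lt_add_right (WithBot.natCast_ne_bot d) (degree_derivative_lt hq₀)
      _ ≤ n := hq

end Degree

/-- A semiclassical weight on the interval with endpoints `l` and `r` (in either order, as for
`∫ x in l..r`): an integrable `w` satisfying the Pearson equation `(σ w)' = τ w` inside the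
interval, with `σ w` vanishing at the endpoints, so that integration by parts has no boundary
terms. -/
structure IsSemiclassicalWeight (σ τ : ℝ[X]) (w : ℝ → ℝ) (l r : ℝ) : Prop where
  intervalIntegrable : IntervalIntegrable w volume l r
  continuousOn : ContinuousOn (fun x => σ.eval x * w x) (Set.uIcc l r)
  hasDerivAt : ∀ x ∈ Set.uIoo l r, HasDerivAt (fun x => σ.eval x * w x) (τ.eval x * w x) x
  left_eq_zero : σ.eval l * w l = 0
  right_eq_zero : σ.eval r * w r = 0

namespace IsSemiclassicalWeight

variable {σ τ : ℝ[X]} {w f f' : ℝ → ℝ} {l r : ℝ}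

lemma hasDerivAt_eval_mul (hw : IsSemiclassicalWeight σ τ w l r) (g : ℝ[X]) {x : ℝ}
    (hx : x ∈ Set.uIoo l r) :
    HasDerivAt (fun x => g.eval x * (σ.eval x * w x))
      ((σ * derivative g + τ * g).eval x * w x) x := by
  refine ((g.hasDerivAt x).mul (hw.hasDerivAt x hx)).congr_deriv ?_
  simp only [eval_add, eval_mul]
  ring

theorem integral_deriv_mul_eq_neg (hw : IsSemiclassicalWeight σ τ w l r)
    (hf : ContinuousOn f (Set.uIcc l r)) (hff' : ∀ x ∈ Set.uIoo l r, HasDerivAt f (f' x) x)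
    (hf' : IntervalIntegrable f' volume l r) (g : ℝ[X]) :
    ∫ x in l..r, f' x * (g.eval x * (σ.eval x * w x)) =
      -∫ x in l..r, f x * ((σ * derivative g + τ * g).eval x * w x) := by
  rw [intervalIntegral.integral_mul_deriv_eq_deriv_mul_of_hasDerivAt hf
    (g.continuousOn.fun_mul hw.continuousOn) hff' (fun x hx => hw.hasDerivAt_eval_mul g hx) hf'
    (hw.intervalIntegrable.continuousOn_mul (Polynomial.continuousOn _))]
  simp only [hw.left_eq_zero, hw.right_eq_zero, mul_zero, sub_zero, zero_sub, neg_neg]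

theorem integral_deriv_mul_eq_zero (hw : IsSemiclassicalWeight σ τ w l r) {d n : ℕ}
    (hσ : σ.degree ≤ d + 1) (hτ : τ.degree ≤ d)
    (hf : ContinuousOn f (Set.uIcc l r)) (hff' : ∀ x ∈ Set.uIoo l r, HasDerivAt f (f' x) x)
    (hf' : IntervalIntegrable f' volume l r)
    (horth : ∀ p : ℝ[X], p.degree < n → ∫ x in l..r, f x * (p.eval x * w x) = 0)
    {g : ℝ[X]} (hg : g.degree + d < n) :
    ∫ x in l..r, f' x * (g.eval x * (σ.eval x * w x)) = 0 := by
  rw [hw.integral_deriv_mul_eq_neg hf hff' hf' g,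
    horth _ ((degree_mul_derivative_add_mul_le hσ hτ g).trans_lt hg), neg_zero]

end IsSemiclassicalWeight

/-- The weight `(x - α)^a (1 - x²)^k` of orthogonal polynomials on a spherical cap. To the left of
`α` it is `cos (π a) |x - α|^a (1 - x²)^k`, by the convention for real powers of negative
numbers. -/
noncomputable def sphericalCapWeight (α a : ℝ) (k : ℕ) (x : ℝ) : ℝ :=
  (x - α) ^ a * (1 - x ^ 2) ^ k

/-- The coefficient `σ` in the Pearson equation `(σ w)' = τ w` of `sphericalCapWeight`. -/
noncomputable def sphericalCapSigma (α : ℝ) : ℝ[X] :=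
  (X - C α) * (1 - X ^ 2)

/-- The coefficient `τ` in the Pearson equation `(σ w)' = τ w` of `sphericalCapWeight`. -/
noncomputable def sphericalCapTau (α a : ℝ) (k : ℕ) : ℝ[X] :=
  C (a + 1) * (1 - X ^ 2) - C (2 * (k + 1) : ℝ) * X * (X - C α)

lemma degree_sphericalCapSigma_le (α : ℝ) : (sphericalCapSigma α).degree ≤ 3 := by
  unfold sphericalCapSigma
  compute_degree

lemma degree_sphericalCapTau_le (α a : ℝ) (k : ℕ) : (sphericalCapTau α a k).degree ≤ 2 := by
  unfold sphericalCapTau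
  compute_degree

lemma rpow_add_one_of_add_one_ne_zero {y : ℝ} (hy : y + 1 ≠ 0) (x : ℝ) :
    x ^ (y + 1) = x ^ y * x := by
  rcases eq_or_ne x 0 with rfl | hx
  · rw [zero_rpow hy, mul_zero]
  · exact rpow_add_one hx y

section SphericalCap

variable {α a : ℝ} {k : ℕ}

lemma eval_sphericalCapSigma_mul_weight (ha : a + 1 ≠ 0) (x : ℝ) :
    (sphericalCapSigma α).eval x * sphericalCapWeight α a k x =
      sphericalCapWeight α (a + 1) (k + 1) x := by
  simp only [sphericalCapSigma, sphericalCapWeight, eval_mul, eval_sub, eval_X, eval_C, eval_one,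
    eval_pow, rpow_add_one_of_add_one_ne_zero ha, pow_succ (1 - x ^ 2)]
  ring

lemma continuous_sphericalCapWeight (ha : 0 ≤ a) : Continuous (sphericalCapWeight α a k) :=
  ((continuous_sub_right α).rpow_const fun _ => Or.inr ha).mul (by fun_prop)

lemma intervalIntegrable_sphericalCapWeight (ha : -1 < a) (l r : ℝ) :
    IntervalIntegrable (sphericalCapWeight α a k) volume l r := by
  have hrpow : IntervalIntegrable (fun x => (x - α) ^ a) volume l r := by
    simpa using (intervalIntegral.intervalIntegrable_rpow' (a := l - α) (b := r - α)
      ha).comp_sub_right α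
  exact hrpow.mul_continuousOn (by fun_prop)

lemma hasDerivAt_sphericalCapWeight {x : ℝ} (hx : x ≠ α) :
    HasDerivAt (sphericalCapWeight α (a + 1) (k + 1))
      ((sphericalCapTau α a k).eval x * sphericalCapWeight α a k x) x := by
  have hx₀ : x - α ≠ 0 := sub_ne_zero.mpr hx
  have hleft : HasDerivAt (fun x => (x - α) ^ (a + 1)) (1 * (a + 1) * (x - α) ^ (a + 1 - 1)) x :=
    ((hasDerivAt_id x).sub_const α).rpow_const (Or.inl hx₀)
  have hright : HasDerivAt (fun x : ℝ => (1 - x ^ 2) ^ (k + 1)) _ x :=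
    ((hasDerivAt_pow 2 x).const_sub 1).fun_pow (k + 1)
  refine (hleft.mul hright).congr_deriv ?_
  simp only [sphericalCapTau, sphericalCapWeight, add_sub_cancel_right, rpow_add_one hx₀, eval_mul,
    eval_sub, eval_X, eval_C, eval_one, eval_pow]
  push_cast
  ring

lemma isSemiclassicalWeight_sphericalCapWeight (ha : -1 < a) :
    IsSemiclassicalWeight (sphericalCapSigma α) (sphericalCapTau α a k)
      (sphericalCapWeight α a k) α 1 := by
  have ha' : a + 1 ≠ 0 := by linarith
  refine ⟨intervalIntegrable_sphericalCapWeight ha α 1, ?_, ?_, ?_, ?_⟩ <;>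
    simp only [eval_sphericalCapSigma_mul_weight ha']
  · exact (continuous_sphericalCapWeight (by linarith)).continuousOn
  · exact fun x hx => hasDerivAt_sphericalCapWeight fun h => Set.left_notMem_uIoo (h ▸ hx)
  · simp [sphericalCapWeight, zero_rpow ha']
  · simp [sphericalCapWeight]

theorem sphericalCap_derivative_IBP_general (ha : -1 < a) {n : ℕ} {f f' : ℝ → ℝ}
    (hf : ContinuousOn f (Set.uIcc α 1)) (hff' : ∀ x ∈ Set.uIoo α 1, HasDerivAt f (f' x) x)
    (hf' : IntervalIntegrable f' volume α 1)
    (horth : ∀ p : ℝ[X], p.degree < n →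
      ∫ x in α..1, f x * p.eval x * (x - α) ^ a * (1 - x ^ 2) ^ k = 0)
    {q : ℝ[X]} (hq : q.degree + 2 ≤ n) :
    ∫ x in α..1, f' x * (derivative q).eval x * (x - α) ^ (a + 1) * (1 - x ^ 2) ^ (k + 1) = 0 := by
  have hzero := (isSemiclassicalWeight_sphericalCapWeight ha).integral_deriv_mul_eq_zero (d := 2)
    (degree_sphericalCapSigma_le α) (degree_sphericalCapTau_le α a k) hf hff' hf'
    (fun p hp => by simpa only [sphericalCapWeight, mul_assoc] using horth p hp)
    (degree_derivative_add_lt hq)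
  simp only [eval_sphericalCapSigma_mul_weight (by linarith : a + 1 ≠ 0)] at hzero
  simpa only [sphericalCapWeight, mul_assoc] using hzero

end SphericalCap

/-- Integration-by-parts sparsity: if R is the degree-n orthogonal polynomial for the weight (x−α)^a (1−x²)^k on (α,1), then ∫ R′ q′ (x−α)^{a+1} (1−x²)^{k+1} = 0 for every polynomial q of degree at most n−2. -/
theorem sphericalCap_derivative_IBP (α a : ℝ) (hα : α ∈ Set.Ioo (-1 : ℝ) 1) (ha : 0 ≤ a) (k n : ℕ)
    (R : Polynomial ℝ) (hdeg : R.degree = n)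
    (horth : ∀ p : Polynomial ℝ, p.degree < (n : WithBot ℕ) →
      ∫ x in α..1, R.eval x * p.eval x * (x - α) ^ a * (1 - x ^ 2) ^ k = 0)
    (q : Polynomial ℝ) (hq : q.degree + 2 ≤ (n : WithBot ℕ)) :
    ∫ x in α..1, (derivative R).eval x * (derivative q).eval x *
      (x - α) ^ (a + 1) * (1 - x ^ 2) ^ (k + 1) = 0 := by
  exact sphericalCap_derivative_IBP_general (by linarith) R.continuousOn
    (fun x _ => R.hasDerivAt x) ((derivative R).continuous.intervalIntegrable α 1) horth hq
end

section
/- Fix α ∈ (−1,1), a real number a ≥ 0 and an integer k ≥ 0. Let R be a real polynomial of degree n that is orthogonal of degree n for the weight (x−α)^a (1−x²)^k on (α,1). Then for every real polynomial S with deg S ≤ n − 3, ∫_α^1 S(x) · [k x R(x) − (1−x²) R'(x)] · (x−α)^{a+1} (1−x²)^k dx = 0. (This is the sparsity of the spherical derivative operator D_φ^{(a)}: the matrix taking coefficients in the parameter-a basis to coefficients of ρ ∂f/∂φ in the parameter-(a+1) basis is block-diagonal with sub-block bandwidths (2,4).) -/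
open MeasureTheory Real Polynomial

/-!
The weight `w = (x - α) ^ a * (1 - x ^ 2) ^ k` satisfies a Pearson equation `(σ w)' = τ w` with
`σ = (x - α) * (1 - x ^ 2)` cubic, `τ` quadratic, and `σ w` zero at both endpoints. Integrating
`(S R σ w)'` therefore moves the derivative from `R` to `S`, and turns the coupling integral into
`∫ R p w` with `deg p ≤ deg S + 2 < n`, which vanishes by orthogonality.
-/

/-- The weight `(x - α) ^ a * (1 - x ^ 2) ^ k` on the interval `(α, 1)`, for real exponents. -/
noncomputable def capWeight (α a k x : ℝ) : ℝ := (x - α) ^ a * (1 - x ^ 2) ^ k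

/-- The polynomial `τ` of the Pearson equation `((x - α) * (1 - x ^ 2) * w)' = τ * w` satisfied by
`w = capWeight α a k`. -/
noncomputable def capPearson (α a k : ℝ) : ℝ[X] :=
  C (a + 1) * (1 - X ^ 2) - C (2 * (k + 1)) * X * (X - C α)

/-- The formal adjoint of `f ↦ k * x * f - (1 - x ^ 2) * f'` applied to the polynomial `S`, from
the weight `capWeight α (a + 1) k` to the weight `capWeight α a k`. -/
noncomputable def capDphiAdjoint (α a k : ℝ) (S : ℝ[X]) : ℝ[X] :=
  S * (C k * X * (X - C α) + capPearson α a k) + derivative S * ((X - C α) * (1 - X ^ 2))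

theorem natDegree_capPearson_le (α a k : ℝ) : (capPearson α a k).natDegree ≤ 2 := by
  rw [capPearson]
  compute_degree

theorem natDegree_capDphiAdjoint_le (α a k : ℝ) (S : ℝ[X]) :
    (capDphiAdjoint α a k S).natDegree ≤ S.natDegree + 2 := by
  refine natDegree_add_le_of_degree_le (natDegree_mul_le_of_le le_rfl ?_) ?_
  · refine natDegree_add_le_of_degree_le ?_ (natDegree_capPearson_le α a k)
    compute_degree
  · have hσ : ((X - C α) * (1 - X ^ 2) : ℝ[X]).natDegree ≤ 3 := by compute_degree
    rcases Nat.eq_zero_or_pos S.natDegree with hS | hS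
    · simp [derivative_of_natDegree_zero hS]
    · have := natDegree_mul_le_of_le (natDegree_derivative_le S) hσ
      lia

theorem degree_capDphiAdjoint_lt (α a k : ℝ) {S : ℝ[X]} {n : ℕ} (hS : S.degree + 3 ≤ n) :
    (capDphiAdjoint α a k S).degree < n := by
  rcases eq_or_ne S 0 with rfl | hS0
  · simp [capDphiAdjoint]
  · rw [degree_eq_natDegree hS0] at hS
    have hSn : S.natDegree + 3 ≤ n := mod_cast hS
    have := natDegree_capDphiAdjoint_le α a k S
    exact degree_le_natDegree.trans_lt (by exact_mod_cast (by lia))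

theorem one_sub_sq_pos_of_mem_Ioo {α x : ℝ} (hα : -1 < α) (hx : x ∈ Set.Ioo α 1) :
    0 < 1 - x ^ 2 := by
  nlinarith [hx.1, hx.2]

theorem intervalIntegrable_sub_rpow {r : ℝ} (hr : -1 < r) (a b c : ℝ) :
    IntervalIntegrable (fun x ↦ (x - c) ^ r) volume a b := by
  simpa using
    (intervalIntegral.intervalIntegrable_rpow' (a := a - c) (b := b - c) hr).comp_sub_right c

theorem intervalIntegrable_rpow_sub {r : ℝ} (hr : -1 < r) (a b c : ℝ) :
    IntervalIntegrable (fun x ↦ (c - x) ^ r) volume a b := by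
  simpa using
    (intervalIntegral.intervalIntegrable_rpow' (a := c - a) (b := c - b) hr).comp_sub_left c

section Weight

variable {α a k x : ℝ}

theorem capWeight_add_one_left (hx : x ≠ α) :
    capWeight α (a + 1) k x = (x - α) * capWeight α a k x := by
  rw [capWeight, capWeight, rpow_add_one (sub_ne_zero.2 hx)]
  ring

theorem capWeight_add_one_right (hx : 1 - x ^ 2 ≠ 0) :
    capWeight α a (k + 1) x = (1 - x ^ 2) * capWeight α a k x := by
  rw [capWeight, capWeight, rpow_add_one hx]
  ring

theorem capWeight_self (ha : a ≠ 0) : capWeight α a k α = 0 := by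
  simp [capWeight, zero_rpow ha]

theorem capWeight_one (hk : k ≠ 0) : capWeight α a k 1 = 0 := by
  simp [capWeight, zero_rpow hk]

theorem continuous_capWeight (ha : 0 ≤ a) (hk : 0 ≤ k) : Continuous (capWeight α a k) :=
  ((continuous_id.sub continuous_const).rpow_const fun _ ↦ Or.inr ha).mul
    ((continuous_const.sub (continuous_pow 2)).rpow_const fun _ ↦ Or.inr hk)

theorem hasDerivAt_capWeight_add_one (hxα : x ≠ α) (hx1 : 1 - x ^ 2 ≠ 0) :
    HasDerivAt (capWeight α (a + 1) (k + 1)) ((capPearson α a k).eval x * capWeight α a k x) x := by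
  rw [← sub_ne_zero] at hxα
  have hleft := ((hasDerivAt_id x).sub_const α).rpow_const (p := a + 1) (Or.inl hxα)
  have hright := ((hasDerivAt_pow 2 x).const_sub 1).rpow_const (p := k + 1) (Or.inl hx1)
  refine (hleft.mul hright).congr_deriv ?_
  simp only [id_eq, add_sub_cancel_right, rpow_add_one hxα, rpow_add_one hx1, capWeight, capPearson,
    eval_sub, eval_mul, eval_C, eval_one, eval_pow, eval_X]
  ring

theorem intervalIntegrable_capWeight (hα : α ∈ Set.Ioo (-1) 1) (ha : -1 < a) (hk : -1 < k) :
    IntervalIntegrable (capWeight α a k) volume α 1 := by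
  -- Only one factor is singular on each side of an interior point `c`.
  obtain ⟨c, hαc, hc1⟩ := exists_between hα.2
  have nearα : IntervalIntegrable (capWeight α a k) volume α c := by
    refine (intervalIntegrable_sub_rpow ha α c α).mul_continuousOn
      (ContinuousOn.rpow_const (by fun_prop) fun x hx ↦ Or.inl ?_)
    rw [Set.uIcc_of_le hαc.le] at hx
    nlinarith [hα.1, hx.1, hx.2]
  have near1 : IntervalIntegrable
      (fun x ↦ (x - α) ^ a * (1 + x) ^ k * (1 - x) ^ k) volume c 1 := by
    refine (intervalIntegrable_rpow_sub hk c 1 1).continuousOn_mul (ContinuousOn.mul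
      (ContinuousOn.rpow_const (by fun_prop) fun x hx ↦ Or.inl ?_)
      (ContinuousOn.rpow_const (by fun_prop) fun x hx ↦ Or.inl ?_))
    all_goals
      rw [Set.uIcc_of_le hc1.le] at hx
      linarith [hα.1, hx.1]
  refine nearα.trans (near1.congr_uIoo fun x hx ↦ ?_)
  rw [Set.uIoo_of_le hc1.le] at hx
  have hfactor : (1 - x ^ 2) ^ k = (1 + x) ^ k * (1 - x) ^ k := by
    rw [← mul_rpow (by linarith [hα.1, hx.1]) (by linarith [hx.2])]
    ring_nf
  simp only [capWeight, hfactor, mul_assoc]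

end Weight

section IntegrationByParts

variable {α a k : ℝ} {f f' : ℝ → ℝ}

theorem intervalIntegrable_deriv_mul_capWeight_add_mul_pearson (hα : α ∈ Set.Ioo (-1) 1)
    (ha : -1 < a) (hk : -1 < k) (hf : ContinuousOn f (Set.Icc α 1))
    (hf' : IntervalIntegrable f' volume α 1) :
    IntervalIntegrable (fun x ↦ f' x * capWeight α (a + 1) (k + 1) x +
      f x * ((capPearson α a k).eval x * capWeight α a k x)) volume α 1 := by
  rw [← Set.uIcc_of_le hα.2.le] at hf
  exact (hf'.mul_continuousOn (continuous_capWeight (by linarith) (by linarith)).continuousOn).add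
    (((intervalIntegrable_capWeight hα ha hk).continuousOn_mul
      (capPearson α a k).continuousOn).continuousOn_mul hf)

theorem integral_deriv_mul_capWeight_add_mul_pearson_eq_zero (hα : α ∈ Set.Ioo (-1) 1)
    (ha : -1 < a) (hk : -1 < k) (hf : ContinuousOn f (Set.Icc α 1))
    (hff' : ∀ x ∈ Set.Ioo α 1, HasDerivAt f (f' x) x) (hf' : IntervalIntegrable f' volume α 1) :
    ∫ x in α..1, (f' x * capWeight α (a + 1) (k + 1) x +
      f x * ((capPearson α a k).eval x * capWeight α a k x)) = 0 := by
  rw [intervalIntegral.integral_deriv_mul_eq_sub_of_hasDeriv_right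
    (by rwa [Set.uIcc_of_le hα.2.le])
    (continuous_capWeight (by linarith) (by linarith)).continuousOn
    (fun x hx ↦ ?_) (fun x hx ↦ ?_) hf'
    ((intervalIntegrable_capWeight hα ha hk).continuousOn_mul (capPearson α a k).continuousOn),
    capWeight_one (by linarith), capWeight_self (by linarith), mul_zero, mul_zero, sub_zero]
  all_goals rw [min_eq_left hα.2.le, max_eq_right hα.2.le] at hx
  · exact (hff' x hx).hasDerivWithinAt
  · exact (hasDerivAt_capWeight_add_one hx.1.ne'
      (one_sub_sq_pos_of_mem_Ioo hα.1 hx).ne').hasDerivWithinAt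

theorem integral_mul_Dphi_eq_integral_mul_DphiAdjoint (hα : α ∈ Set.Ioo (-1) 1)
    (ha : -1 < a) (hk : -1 < k) (hf : ContinuousOn f (Set.Icc α 1))
    (hff' : ∀ x ∈ Set.Ioo α 1, HasDerivAt f (f' x) x) (hf' : IntervalIntegrable f' volume α 1)
    (S : ℝ[X]) :
    ∫ x in α..1, S.eval x * (k * x * f x - (1 - x ^ 2) * f' x) * capWeight α (a + 1) k x =
      ∫ x in α..1, f x * (capDphiAdjoint α a k S).eval x * capWeight α a k x := by
  have hf_uIcc : ContinuousOn f (Set.uIcc α 1) := by rwa [Set.uIcc_of_le hα.2.le]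
  have hSf : ContinuousOn (fun x ↦ S.eval x * f x) (Set.Icc α 1) := S.continuousOn.mul hf
  have hSf' : IntervalIntegrable (fun x ↦ (derivative S).eval x * f x + S.eval x * f' x)
      volume α 1 :=
    ((derivative S).continuousOn.mul hf_uIcc).intervalIntegrable.add
      (hf'.continuousOn_mul S.continuousOn)
  have hparts := integral_deriv_mul_capWeight_add_mul_pearson_eq_zero hα ha hk hSf
    (fun x hx ↦ (S.hasDerivAt x).mul (hff' x hx)) hSf'
  have hadj : IntervalIntegrable
      (fun x ↦ f x * (capDphiAdjoint α a k S).eval x * capWeight α a k x) volume α 1 :=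
    (intervalIntegrable_capWeight hα ha hk).continuousOn_mul
      (hf_uIcc.mul (capDphiAdjoint α a k S).continuousOn)
  rw [← sub_zero (∫ x in α..1, f x * _ * _), ← hparts, ← intervalIntegral.integral_sub hadj
    (intervalIntegrable_deriv_mul_capWeight_add_mul_pearson hα ha hk hSf hSf')]
  refine intervalIntegral.integral_congr_Ioo_of_le hα.2.le fun x hx ↦ ?_
  simp only [capWeight_add_one_left hx.1.ne',
    capWeight_add_one_right (one_sub_sq_pos_of_mem_Ioo hα.1 hx).ne',
    capDphiAdjoint, eval_add, eval_mul, eval_sub, eval_C, eval_X, eval_one, eval_pow]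
  ring

end IntegrationByParts

theorem sphericalCap_Dphi_sparse_general {α a k : ℝ} (hα : α ∈ Set.Ioo (-1) 1) (ha : -1 < a)
    (hk : -1 < k) {n : ℕ} {f f' : ℝ → ℝ} (hf : ContinuousOn f (Set.Icc α 1))
    (hff' : ∀ x ∈ Set.Ioo α 1, HasDerivAt f (f' x) x) (hf' : IntervalIntegrable f' volume α 1)
    (horth : ∀ p : ℝ[X], p.degree < n → ∫ x in α..1, f x * p.eval x * capWeight α a k x = 0)
    {S : ℝ[X]} (hS : S.degree + 3 ≤ n) :
    ∫ x in α..1, S.eval x * (k * x * f x - (1 - x ^ 2) * f' x) * capWeight α (a + 1) k x = 0 := by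
  rw [integral_mul_Dphi_eq_integral_mul_DphiAdjoint hα ha hk hf hff' hf' S]
  exact horth _ (degree_capDphiAdjoint_lt α a k hS)

/-- Sparsity of the spherical derivative operator D_φ^{(a)}: the coupling of ρ ∂/∂φ applied to the degree-n orthogonal polynomial against polynomials of degree at most n−3 vanishes. -/
theorem sphericalCap_Dphi_sparse (α a : ℝ) (hα : α ∈ Set.Ioo (-1 : ℝ) 1) (ha : 0 ≤ a) (k n : ℕ)
    (R : Polynomial ℝ) (hdeg : R.degree = n)
    (horth : ∀ p : Polynomial ℝ, p.degree < (n : WithBot ℕ) →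
      ∫ x in α..1, R.eval x * p.eval x * (x - α) ^ a * (1 - x ^ 2) ^ k = 0)
    (S : Polynomial ℝ) (hS : S.degree + 3 ≤ (n : WithBot ℕ)) :
    ∫ x in α..1, S.eval x *
      ((k : ℝ) * x * R.eval x - (1 - x ^ 2) * (derivative R).eval x) *
      (x - α) ^ (a + 1) * (1 - x ^ 2) ^ k = 0 := by
  simpa only [capWeight, ← mul_assoc, rpow_natCast] using
    sphericalCap_Dphi_sparse_general hα (by linarith) (neg_one_lt_zero.trans_le k.cast_nonneg)
      R.continuousOn (fun x _ ↦ R.hasDerivAt x) ((derivative R).continuous.intervalIntegrable _ _)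
      (by simpa only [capWeight, ← mul_assoc, rpow_natCast] using horth) hS
end

section
/- Fix α ∈ (−1,1), a real number a ≥ 0, an integer ã ≥ 2 and an integer k ≥ 0. Let R be a real polynomial of degree n that is orthogonal of degree n for the weight (x−α)^a (1−x²)^k on (α,1). Then for every real polynomial S with deg S ≤ n − ã − 1, ∫_α^1 S(x) · (x−α)^{a+ã} · [ −k(k+1) (1−x²)^k R(x) + d/dx( (1−x²)^{k+1} R'(x) ) ] dx = 0. (This is the sparsity of the spherical Laplacian operator ℒ^{(a)→(a+ã)}: it is block-diagonal with sub-block bandwidths (0,4) for ã = 2.) -/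
open MeasureTheory Real Polynomial

/-!
The operator `R ↦ ((1 - x²)^(k+1) R')'` is in divergence form, so two integrations by parts move it
from `R` onto `(x - α)^b S`, where `b = a + ã`. The boundary terms vanish at `1` because of the
factor `(1 - x²)^(k+1)` and at `α` because `b - 1 > 0`. Differentiating `(x - α)^b S` twice costs
two powers of `x - α`, leaving `(x - α)^(b-2) (1 - x²)^k` times a polynomial of degree at most
`deg S + 2`. As `ã ≥ 2`, the surplus `(x - α)^(ã-2)` is itself a polynomial, so the integral pairs
`R` with a polynomial of degree at most `deg S + ã < n` in the original weight.
-/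

namespace SphericalCap

variable {A : Type*} [CommRing A] {α β b c : ℝ}

/-- The integral of a polynomial against the weight `(x - α)^c` on `[α, β]`. It is meant for
`α ≤ β` and `-1 < c`, where the weight is nonnegative and integrable. -/
noncomputable def rpowIntegral (α β c : ℝ) (P : ℝ[X]) : ℝ :=
  ∫ x in α..β, (x - α) ^ c * P.eval x

/-- The Euler operator `(x - α) d/dx + c`, which is differentiation conjugated by the
weight when `A = ℝ`: `d/dx ((x - α)^c P) = (x - α)^(c-1) (eulerOp α c P)`. -/
noncomputable def eulerOp (α c : A) (P : A[X]) : A[X] :=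
  (X - C α) * derivative P + C c * P

theorem eulerOp_mul (α c : A) (P Q : A[X]) :
    eulerOp α c (P * Q) = eulerOp α c P * Q + (X - C α) * (P * derivative Q) := by
  simp only [eulerOp, derivative_mul]
  ring

theorem intervalIntegrable_rpow_mul_eval (hc : -1 < c) (P : ℝ[X]) :
    IntervalIntegrable (fun x ↦ (x - α) ^ c * P.eval x) volume α β := by
  have hw : IntervalIntegrable (fun x : ℝ ↦ (x - α) ^ c) volume α β := by
    simpa using (intervalIntegral.intervalIntegrable_rpow' (a := 0) hc).comp_sub_right
      (b := β - α) α
  exact hw.mul_continuousOn P.continuousOn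

theorem rpowIntegral_add (hc : -1 < c) (P Q : ℝ[X]) :
    rpowIntegral α β c (P + Q) = rpowIntegral α β c P + rpowIntegral α β c Q := by
  simp only [rpowIntegral, eval_add, mul_add]
  exact intervalIntegral.integral_add (intervalIntegrable_rpow_mul_eval hc P)
    (intervalIntegrable_rpow_mul_eval hc Q)

theorem rpowIntegral_add_natCast (hαβ : α ≤ β) (c : ℝ) (m : ℕ) (P : ℝ[X]) :
    rpowIntegral α β (c + m) P = rpowIntegral α β c ((X - C α) ^ m * P) := by
  refine intervalIntegral.integral_congr_uIoo fun x hx ↦ ?_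
  rw [Set.uIoo_of_le hαβ] at hx
  simp only [rpow_add_natCast (sub_pos.2 hx.1).ne', eval_mul, eval_pow, eval_sub, eval_X, eval_C,
    mul_assoc]

theorem rpowIntegral_sub_one_eulerOp (hαβ : α ≤ β) (hc : 0 < c) (P : ℝ[X]) :
    rpowIntegral α β (c - 1) (eulerOp α c P) = (β - α) ^ c * P.eval β := by
  have hcont : ContinuousOn (fun x ↦ (x - α) ^ c * P.eval x) (Set.Icc α β) :=
    (((continuous_id.sub continuous_const).rpow_const fun _ ↦ Or.inr hc.le).mul
      P.continuous).continuousOn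
  have hderiv : ∀ x ∈ Set.Ioo α β, HasDerivAt (fun x ↦ (x - α) ^ c * P.eval x)
      ((x - α) ^ (c - 1) * (eulerOp α c P).eval x) x := fun x hx ↦ by
    have hx' : x - α ≠ 0 := (sub_pos.2 hx.1).ne'
    refine ((((hasDerivAt_id x).sub_const α).rpow_const (Or.inl hx')).mul
      (P.hasDerivAt x)).congr_deriv ?_
    simp only [eulerOp, eval_add, eval_mul, eval_sub, eval_X, eval_C, id, rpow_sub_one hx']
    field_simp
    ring
  rw [rpowIntegral, intervalIntegral.integral_eq_sub_of_hasDerivAt_of_le hαβ hcont hderiv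
    (intervalIntegrable_rpow_mul_eval (by linarith) _)]
  simp [zero_rpow hc.ne']

theorem rpowIntegral_mul_derivative (hαβ : α ≤ β) (hc : 0 < c) {P Q : ℝ[X]}
    (hPQ : (P * Q).eval β = 0) :
    rpowIntegral α β c (P * derivative Q) = -rpowIntegral α β (c - 1) (eulerOp α c P * Q) := by
  have hshift := rpowIntegral_add_natCast hαβ (c - 1) 1 (P * derivative Q)
  have hboundary := rpowIntegral_sub_one_eulerOp hαβ hc (P * Q)
  rw [eulerOp_mul, rpowIntegral_add (by linarith), hPQ, mul_zero] at hboundary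
  rw [Nat.cast_one, sub_add_cancel, pow_one] at hshift
  linarith

theorem rpowIntegral_mul_derivative_mul_derivative (hαβ : α ≤ β) (hb : 1 < b) (S R : ℝ[X])
    {w : ℝ[X]} (hw : w.eval β = 0) :
    rpowIntegral α β b (S * derivative (w * derivative R)) =
      rpowIntegral α β (b - 2) (eulerOp α (b - 1) (eulerOp α b S * w) * R) := by
  rw [rpowIntegral_mul_derivative hαβ (by linarith) (by simp [hw]), ← mul_assoc,
    rpowIntegral_mul_derivative hαβ (by linarith) (by simp [hw]), neg_neg, sub_sub,
    one_add_one_eq_two]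

/-- The radial factor `-k(k+1) R - 2(k+1) z R' + (1-z²) R''` of the spherical Laplacian on Fourier
mode `k`, multiplied by `(1-z²)^k`, which brings its first- and second-order terms into divergence
form. -/
noncomputable def radialLaplacian (k : ℕ) (R : ℝ[X]) : ℝ[X] :=
  -(k * (k + 1) : ℝ[X]) * (1 - X ^ 2) ^ k * R + derivative ((1 - X ^ 2) ^ (k + 1) * derivative R)

/-- The formal adjoint of `radialLaplacian k` with respect to the weight `(x - α)^b`, with the
factor `(x - α)^(b-2) (1 - x²)^k` divided out so that a polynomial remains. -/
noncomputable def radialAdjoint (α b : ℝ) (k : ℕ) (S : ℝ[X]) : ℝ[X] :=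
  (1 - X ^ 2) * eulerOp α (b - 1) (eulerOp α b S)
    - (2 * (k + 1) : ℝ[X]) * X * (X - C α) * eulerOp α b S
    - (k * (k + 1) : ℝ[X]) * (X - C α) ^ 2 * S

theorem eulerOp_mul_one_sub_X_sq_pow (α c : A) (k : ℕ) (T : A[X]) :
    eulerOp α c (T * (1 - X ^ 2) ^ (k + 1)) =
      ((1 - X ^ 2) * eulerOp α c T - (2 * (k + 1) : A[X]) * X * (X - C α) * T) *
        (1 - X ^ 2) ^ k := by
  have hderiv : derivative ((1 - X ^ 2 : A[X]) ^ (k + 1)) =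
      -((2 * (k + 1) : A[X]) * X * (1 - X ^ 2) ^ k) := by
    simp only [derivative_pow_succ, map_add, map_natCast, map_one, derivative_sub, derivative_one,
      Nat.cast_one, pow_one, derivative_X]
    ring
  rw [eulerOp_mul, hderiv]
  ring

theorem rpowIntegral_mul_radialLaplacian (hα : α ≤ 1) (hb : 1 < b) (k : ℕ) (S R : ℝ[X]) :
    rpowIntegral α 1 b (S * radialLaplacian k R) =
      rpowIntegral α 1 (b - 2) (radialAdjoint α b k S * ((1 - X ^ 2) ^ k * R)) := by
  have hzeroth := rpowIntegral_add_natCast hα (b - 2) 2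
    (S * (-(k * (k + 1) : ℝ[X]) * (1 - X ^ 2) ^ k * R))
  rw [Nat.cast_ofNat, sub_add_cancel] at hzeroth
  rw [radialLaplacian, mul_add, rpowIntegral_add (by linarith), hzeroth,
    rpowIntegral_mul_derivative_mul_derivative hα hb S R (by simp),
    ← rpowIntegral_add (by linarith), eulerOp_mul_one_sub_X_sq_pow, radialAdjoint]
  congr 1
  ring

theorem degree_eulerOp_le (α c : A) (P : A[X]) : (eulerOp α c P).degree ≤ P.degree := by
  rcases eq_or_ne P 0 with rfl | hP
  · simp [eulerOp]
  have hmul : ((X - C α) * derivative P).degree ≤ P.degree := by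
    refine (degree_mul_le_of_le (degree_X_sub_C_le α) le_rfl).trans ?_
    rw [add_comm]
    exact Nat.WithBot.add_one_le_of_lt (degree_derivative_lt hP)
  have hsmul : (C c * P).degree ≤ P.degree := smul_eq_C_mul (p := P) c ▸ degree_smul_le c P
  exact (degree_add_le_of_le hmul hsmul).trans_eq (max_self _)

theorem degree_radialAdjoint_le (α b : ℝ) (k : ℕ) (S : ℝ[X]) :
    (radialAdjoint α b k S).degree ≤ 2 + S.degree := by
  have hT : (eulerOp α b S).degree ≤ S.degree := degree_eulerOp_le α b S
  have hsecond : ((1 - X ^ 2 : ℝ[X]) * eulerOp α (b - 1) (eulerOp α b S)).degree ≤ 2 + S.degree :=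
    degree_mul_le_of_le (by compute_degree) ((degree_eulerOp_le _ _ _).trans hT)
  have hfirst : ((2 * (k + 1) : ℝ[X]) * X * (X - C α) * eulerOp α b S).degree ≤ 2 + S.degree :=
    degree_mul_le_of_le (by compute_degree) hT
  have hzeroth : ((k * (k + 1) : ℝ[X]) * (X - C α) ^ 2 * S).degree ≤ 2 + S.degree :=
    degree_mul_le_of_le (by compute_degree) le_rfl
  exact (degree_sub_le_of_le (degree_sub_le_of_le hsecond hfirst) hzeroth).trans (by simp)

theorem add_natCast_lt_of_add_add_one_le {d : WithBot ℕ} {j n : ℕ} (h : d + (j + 1) ≤ n) :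
    d + j < n := by
  induction d with
  | bot => simp
  | coe d =>
    rw [← Nat.cast_withBot] at h ⊢
    exact_mod_cast h

end SphericalCap

open SphericalCap in
theorem sphericalCap_laplacian_sparse_general {α a : ℝ} (hα : α ≤ 1) (ha : -1 < a) {k n atil : ℕ}
    (hatil : 2 ≤ atil) {R : ℝ[X]}
    (horth : ∀ p : ℝ[X], p.degree < (n : WithBot ℕ) →
      ∫ x in α..1, R.eval x * p.eval x * (x - α) ^ a * (1 - x ^ 2) ^ k = 0)
    {S : ℝ[X]} (hS : S.degree + ((atil : WithBot ℕ) + 1) ≤ (n : WithBot ℕ)) :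
    ∫ x in α..1, S.eval x * (x - α) ^ (a + (atil : ℝ)) *
      (-((k : ℝ) * ((k : ℝ) + 1)) * (1 - x ^ 2) ^ k * R.eval x
        + (derivative ((1 - X ^ 2) ^ (k + 1) * derivative R)).eval x) = 0 := by
  obtain ⟨m, rfl⟩ := Nat.exists_eq_add_of_le' hatil
  set b : ℝ := a + (m + 2 : ℕ) with hb
  have hb_sub : b - 2 = a + m := by rw [hb]; push_cast; ring
  set p : ℝ[X] := (X - C α) ^ m * radialAdjoint α b k S with hp
  have hdeg : p.degree < n := by
    refine lt_of_le_of_lt ?_ (add_natCast_lt_of_add_add_one_le hS)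
    rw [hp, degree_mul, degree_pow, degree_X_sub_C, nsmul_one, Nat.cast_add, add_comm S.degree,
      add_assoc]
    exact add_le_add_right (degree_radialAdjoint_le α b k S) _
  calc
    _ = rpowIntegral α 1 b (S * radialLaplacian k R) := by
      simp [rpowIntegral, radialLaplacian, mul_left_comm, mul_assoc]
    _ = rpowIntegral α 1 (b - 2) (radialAdjoint α b k S * ((1 - X ^ 2) ^ k * R)) :=
      rpowIntegral_mul_radialLaplacian hα (by linarith [m.cast_nonneg (α := ℝ)]) k S R
    _ = rpowIntegral α 1 a (p * ((1 - X ^ 2) ^ k * R)) := by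
      rw [hb_sub, rpowIntegral_add_natCast hα, hp, mul_assoc]
    _ = ∫ x in α..1, R.eval x * p.eval x * (x - α) ^ a * (1 - x ^ 2) ^ k := by
      simp [rpowIntegral, mul_comm, mul_left_comm, mul_assoc]
    _ = 0 := horth p hdeg

/-- Sparsity of the spherical Laplacian operator ℒ^{(a)→(a+ã)}: the radial coupling of Δ_S applied to the degree-n orthogonal polynomial against polynomials of degree at most n−ã−1, with weight (x−α)^{a+ã}, vanishes. -/
theorem sphericalCap_laplacian_sparse (α a : ℝ) (hα : α ∈ Set.Ioo (-1 : ℝ) 1) (ha : 0 ≤ a) (k n : ℕ) (atil : ℕ) (hatil : 2 ≤ atil)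
    (R : Polynomial ℝ) (hdeg : R.degree = n)
    (horth : ∀ p : Polynomial ℝ, p.degree < (n : WithBot ℕ) →
      ∫ x in α..1, R.eval x * p.eval x * (x - α) ^ a * (1 - x ^ 2) ^ k = 0)
    (S : Polynomial ℝ) (hS : S.degree + ((atil : WithBot ℕ) + 1) ≤ (n : WithBot ℕ)) :
    ∫ x in α..1, S.eval x * (x - α) ^ (a + (atil : ℝ)) *
      (-((k : ℝ) * ((k : ℝ) + 1)) * (1 - x ^ 2) ^ k * R.eval x
        + (derivative ((1 - Polynomial.X ^ 2) ^ (k + 1) * derivative R)).eval x) = 0 :=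
  sphericalCap_laplacian_sparse_general hα.2.le (by linarith) hatil horth hS
end

section
/- Fix α ∈ (−1,1), a real number a ≥ 2 and an integer k ≥ 0. Let R be a real polynomial of degree n that is orthogonal of degree n for the weight (x−α)^a (1−x²)^k on (α,1). Then for every real polynomial S with deg S ≤ n − 1, ∫_α^1 S(x) (x−α)^{a−2} (1−x²)^k { R(x)·[−k(k+1)(x−α)² − 2a(k+1)x(x−α) + a(a−1)(1−x²)] + R'(x)·[−2(k+1)x(x−α)² + 2a(x−α)(1−x²)] + R''(x)·(x−α)²(1−x²) } dx = 0. (This is the sparsity of the weighted spherical Laplacian operator ℒ_W^{(a)→(a−ã)}: it is block-diagonal with sub-block bandwidths (4,0).) -/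
open MeasureTheory Real Polynomial

/-!
With `w = (1 - x²)^k` and `L y = (1 - x²) y'' - 2 (k + 1) x y' - k (k + 1) y` one has
`w * L y = ((1 - x²)^(k + 1) y')' - k (k + 1) w * y`, so `L` is formally self-adjoint for the
weight `w`. The bracket in the theorem is `(x - α)^(2 - a) * L ((x - α)^a * R)`. Two integrations
by parts move `L` onto `S`: the boundary terms vanish at `1` because of `(1 - x²)^(k + 1)`, and at
`α` because `(x - α)^a` and its derivative vanish there. Since `L` does not raise the degree of a
polynomial, what remains is zero by the orthogonality of `R`.
-/

open Set

/-- The radial part of the Laplacian of the unit sphere on the Fourier mode `k`, after the factor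
`(1 - x²)^(k/2)` has been divided out. The function it acts on enters through its value `y` and
derivatives `y'`, `y''`, so that the definition serves real functions at a point `x` as well as
polynomials, with `x = X`. -/
def radialLaplacian {A : Type*} [CommRing A] (k : ℕ) (x y y' y'' : A) : A :=
  (1 - x ^ 2) * y'' - 2 * (k + 1) * x * y' - k * (k + 1) * y

/-- The conjugate `(x - α)^(2 - a) * L ((x - α)^a * y)` of the operator `L` of `radialLaplacian`,
multiplied out so that it makes sense at `x = α` too. As there, `y`, `y'`, `y''` are the values at
`x` of a function and its derivatives. -/
def capRadialLaplacian (k : ℕ) (a α x y y' y'' : ℝ) : ℝ :=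
  y * (-((k : ℝ) * ((k : ℝ) + 1)) * (x - α) ^ 2
      - 2 * a * ((k : ℝ) + 1) * x * (x - α) + a * (a - 1) * (1 - x ^ 2))
    + y' * (-(2 * ((k : ℝ) + 1)) * x * (x - α) ^ 2 + 2 * a * (x - α) * (1 - x ^ 2))
    + y'' * (x - α) ^ 2 * (1 - x ^ 2)

lemma eval_radialLaplacian {A : Type*} [CommRing A] (k : ℕ) (x : A) (p q r s : A[X]) :
    (radialLaplacian k p q r s).eval x =
      radialLaplacian k (p.eval x) (q.eval x) (r.eval x) (s.eval x) := by
  simp [radialLaplacian]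

lemma degree_X_pow_mul_iterate_derivative_le {A : Type*} [Semiring A] (m : ℕ) (p : A[X]) :
    (X ^ m * derivative^[m] p).degree ≤ p.degree := by
  refine (degree_le_iff_coeff_zero _ _).2 fun d hd ↦ ?_
  rw [coeff_X_pow_mul']
  split_ifs with hmd
  · rw [coeff_iterate_derivative, Nat.sub_add_cancel hmd, coeff_eq_zero_of_degree_lt hd, smul_zero]
  · rfl

lemma degree_radialLaplacian_le {A : Type*} [CommRing A] (k : ℕ) (p : A[X]) :
    (radialLaplacian k X p (derivative p) (derivative (derivative p))).degree ≤ p.degree := by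
  have expand : radialLaplacian k X p (derivative p) (derivative (derivative p)) =
      derivative (derivative p) - X ^ 2 * derivative^[2] p
        - (2 * (k + 1)) • (X ^ 1 * derivative^[1] p) - (k * (k + 1)) • p := by
    simp only [radialLaplacian, Function.iterate_succ, Function.iterate_zero, Function.comp_apply,
      id_eq, nsmul_eq_mul]
    push_cast
    ring
  rw [expand, ← mem_degreeLE]
  refine sub_mem (sub_mem (sub_mem ?_ ?_) (nsmul_mem ?_ _)) (nsmul_mem ?_ _) <;>
    rw [mem_degreeLE]
  · exact degree_derivative_le.trans degree_derivative_le
  · exact degree_X_pow_mul_iterate_derivative_le 2 p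
  · exact degree_X_pow_mul_iterate_derivative_le 1 p

lemma continuousOn_sub_rpow_mul {a α : ℝ} {f : ℝ → ℝ} {s : Set ℝ} (ha : 0 ≤ a)
    (cf : ContinuousOn f s) : ContinuousOn (fun t ↦ (t - α) ^ a * f t) s :=
  ((continuous_sub_right α).rpow_const fun _ ↦ .inr ha).continuousOn.mul cf

lemma intervalIntegrable_sub_rpow_mul {b α β : ℝ} {f : ℝ → ℝ} (hb : -1 < b)
    (cf : ContinuousOn f (uIcc α β)) :
    IntervalIntegrable (fun t ↦ (t - α) ^ b * f t) volume α β := by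
  refine IntervalIntegrable.mul_continuousOn ?_ cf
  simpa using (intervalIntegral.intervalIntegrable_rpow' hb (a := 0) (b := β - α)).comp_sub_right α

lemma hasDerivAt_sub_rpow_mul {a α x y' : ℝ} {f : ℝ → ℝ} (hx : x ≠ α) (hf : HasDerivAt f y' x) :
    HasDerivAt (fun t ↦ (t - α) ^ a * f t)
      (a * ((x - α) ^ (a - 1) * f x) + (x - α) ^ a * y') x := by
  refine ((((hasDerivAt_id x).sub_const α).rpow_const
    (.inl (sub_ne_zero.2 hx))).mul hf).congr_deriv ?_
  simp [mul_assoc]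

lemma radialLaplacian_sub_rpow_mul {a α x : ℝ} (k : ℕ) (hx : x ≠ α) (y y' y'' : ℝ) :
    radialLaplacian k x ((x - α) ^ a * y) (a * ((x - α) ^ (a - 1) * y) + (x - α) ^ a * y')
      (a * ((a - 1) * ((x - α) ^ (a - 1 - 1) * y) + (x - α) ^ (a - 1) * y')
        + (a * ((x - α) ^ (a - 1) * y') + (x - α) ^ a * y'')) =
      (x - α) ^ (a - 2) * capRadialLaplacian k a α x y y' y'' := by
  have rpow_a : (x - α) ^ a = (x - α) ^ (a - 2) * (x - α) ^ 2 := by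
    simpa using rpow_add_natCast (sub_ne_zero.2 hx) (a - 2) 2
  have rpow_a_sub_one : (x - α) ^ (a - 1) = (x - α) ^ (a - 2) * (x - α) := by
    rw [← rpow_add_one (sub_ne_zero.2 hx)]
    ring_nf
  rw [rpow_a, rpow_a_sub_one, show a - 1 - 1 = a - 2 by ring, radialLaplacian, capRadialLaplacian]
  ring

section Green

lemma hasDerivAt_mul_wronskian {𝕜 : Type*} [NontriviallyNormedField 𝕜] {f f' g g' : 𝕜 → 𝕜}
    {x f'' g'' : 𝕜} (k : ℕ)
    (hf : HasDerivAt f (f' x) x) (hf' : HasDerivAt f' f'' x)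
    (hg : HasDerivAt g (g' x) x) (hg' : HasDerivAt g' g'' x) :
    HasDerivAt (fun t ↦ (1 - t ^ 2) ^ (k + 1) * (f t * g' t - f' t * g t))
      ((1 - x ^ 2) ^ k * (f x * radialLaplacian k x (g x) (g' x) g'')
        - (1 - x ^ 2) ^ k * (g x * radialLaplacian k x (f x) (f' x) f'')) x := by
  have hweight := (((hasDerivAt_id x).pow 2).const_sub 1).pow (k + 1)
  refine (hweight.mul ((hf.mul hg').sub (hf'.mul hg))).congr_deriv ?_
  simp only [radialLaplacian, Pi.pow_apply, Pi.sub_apply, Pi.mul_apply, id_eq, Nat.cast_add,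
    Nat.cast_one, Nat.cast_ofNat, add_tsub_cancel_right, Nat.add_one_sub_one, pow_one]
  ring

variable {f f' f'' g g' g'' : ℝ → ℝ}

lemma integral_mul_radialLaplacian_sub {α β : ℝ} (k : ℕ) (hαβ : α ≤ β)
    (cf : ContinuousOn f (Icc α β)) (cf' : ContinuousOn f' (Icc α β))
    (cg : ContinuousOn g (Icc α β)) (cg' : ContinuousOn g' (Icc α β))
    (hf : ∀ x ∈ Ioo α β, HasDerivAt f (f' x) x) (hf' : ∀ x ∈ Ioo α β, HasDerivAt f' (f'' x) x)
    (hg : ∀ x ∈ Ioo α β, HasDerivAt g (g' x) x) (hg' : ∀ x ∈ Ioo α β, HasDerivAt g' (g'' x) x)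
    (hfg : IntervalIntegrable
      (fun x ↦ (1 - x ^ 2) ^ k * (f x * radialLaplacian k x (g x) (g' x) (g'' x))) volume α β)
    (hgf : IntervalIntegrable
      (fun x ↦ (1 - x ^ 2) ^ k * (g x * radialLaplacian k x (f x) (f' x) (f'' x))) volume α β) :
    (∫ x in α..β, (1 - x ^ 2) ^ k * (f x * radialLaplacian k x (g x) (g' x) (g'' x)))
        - ∫ x in α..β, (1 - x ^ 2) ^ k * (g x * radialLaplacian k x (f x) (f' x) (f'' x)) =
      (1 - β ^ 2) ^ (k + 1) * (f β * g' β - f' β * g β)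
        - (1 - α ^ 2) ^ (k + 1) * (f α * g' α - f' α * g α) := by
  rw [← intervalIntegral.integral_sub hfg hgf]
  refine intervalIntegral.integral_eq_sub_of_hasDerivAt_of_le
    (f := fun x ↦ (1 - x ^ 2) ^ (k + 1) * (f x * g' x - f' x * g x)) hαβ (by fun_prop)
    (fun x hx ↦ ?_) (hfg.sub hgf)
  exact hasDerivAt_mul_wronskian k (hf x hx) (hf' x hx) (hg x hx) (hg' x hx)

lemma integral_mul_radialLaplacian_comm {α : ℝ} (k : ℕ) (hα : α ≤ 1)
    (cf : ContinuousOn f (Icc α 1)) (cf' : ContinuousOn f' (Icc α 1))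
    (hf : ∀ x ∈ Ioo α 1, HasDerivAt f (f' x) x) (hf' : ∀ x ∈ Ioo α 1, HasDerivAt f' (f'' x) x)
    (hfα : f α = 0) (hfα' : f' α = 0)
    (cg : ContinuousOn g (Icc α 1)) (cg' : ContinuousOn g' (Icc α 1))
    (cg'' : ContinuousOn g'' (Icc α 1))
    (hg : ∀ x ∈ Ioo α 1, HasDerivAt g (g' x) x) (hg' : ∀ x ∈ Ioo α 1, HasDerivAt g' (g'' x) x)
    (hgf : IntervalIntegrable
      (fun x ↦ (1 - x ^ 2) ^ k * (g x * radialLaplacian k x (f x) (f' x) (f'' x))) volume α 1) :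
    ∫ x in α..1, (1 - x ^ 2) ^ k * (g x * radialLaplacian k x (f x) (f' x) (f'' x)) =
      ∫ x in α..1, (1 - x ^ 2) ^ k * (f x * radialLaplacian k x (g x) (g' x) (g'' x)) := by
  have hfg : IntervalIntegrable
      (fun x ↦ (1 - x ^ 2) ^ k * (f x * radialLaplacian k x (g x) (g' x) (g'' x)))
      volume α 1 := by
    refine ContinuousOn.intervalIntegrable_of_Icc hα ?_
    unfold radialLaplacian
    fun_prop
  have green := integral_mul_radialLaplacian_sub k hα cg cg' cf cf' hg hg' hf hf' hgf hfg
  refine sub_eq_zero.1 (green.trans ?_)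
  simp [hfα, hfα']

end Green

section Cap

variable {α a : ℝ} {f f' f'' : ℝ → ℝ}

lemma integral_mul_capRadialLaplacian {g g' g'' : ℝ → ℝ} (k : ℕ) (hα : α ≤ 1) (ha : 1 < a)
    (cf : ContinuousOn f (Icc α 1)) (cf' : ContinuousOn f' (Icc α 1))
    (cf'' : ContinuousOn f'' (Icc α 1))
    (hf : ∀ x ∈ Ioo α 1, HasDerivAt f (f' x) x) (hf' : ∀ x ∈ Ioo α 1, HasDerivAt f' (f'' x) x)
    (cg : ContinuousOn g (Icc α 1)) (cg' : ContinuousOn g' (Icc α 1))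
    (cg'' : ContinuousOn g'' (Icc α 1))
    (hg : ∀ x ∈ Ioo α 1, HasDerivAt g (g' x) x) (hg' : ∀ x ∈ Ioo α 1, HasDerivAt g' (g'' x) x) :
    ∫ x in α..1, g x * (x - α) ^ (a - 2) * (1 - x ^ 2) ^ k *
        capRadialLaplacian k a α x (f x) (f' x) (f'' x) =
      ∫ x in α..1, f x * radialLaplacian k x (g x) (g' x) (g'' x) * (x - α) ^ a *
        (1 - x ^ 2) ^ k := by
  let u (x : ℝ) : ℝ := (x - α) ^ a * f x
  let u' (x : ℝ) : ℝ := a * ((x - α) ^ (a - 1) * f x) + (x - α) ^ a * f' x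
  let u'' (x : ℝ) : ℝ :=
    a * ((a - 1) * ((x - α) ^ (a - 1 - 1) * f x) + (x - α) ^ (a - 1) * f' x)
      + (a * ((x - α) ^ (a - 1) * f' x) + (x - α) ^ a * f'' x)
  have cu : ContinuousOn u (Icc α 1) := continuousOn_sub_rpow_mul (by linarith) cf
  have cu' : ContinuousOn u' (Icc α 1) :=
    ((continuousOn_sub_rpow_mul (by linarith) cf).const_mul a).add
      (continuousOn_sub_rpow_mul (by linarith) cf')
  have du (x) (hx : x ∈ Ioo α 1) : HasDerivAt u (u' x) x :=
    hasDerivAt_sub_rpow_mul hx.1.ne' (hf x hx)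
  have du' (x) (hx : x ∈ Ioo α 1) : HasDerivAt u' (u'' x) x :=
    ((hasDerivAt_sub_rpow_mul hx.1.ne' (hf x hx)).const_mul a).add
      (hasDerivAt_sub_rpow_mul hx.1.ne' (hf' x hx))
  have hu : u α = 0 := by simp [u, zero_rpow (show a ≠ 0 by linarith)]
  have hu' : u' α = 0 := by
    simp [u', zero_rpow (show a ≠ 0 by linarith), zero_rpow (show a - 1 ≠ 0 by linarith)]
  have conjugate : EqOn
      (fun x ↦ (x - α) ^ (a - 2) *
        (g x * (1 - x ^ 2) ^ k * capRadialLaplacian k a α x (f x) (f' x) (f'' x)))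
      (fun x ↦ (1 - x ^ 2) ^ k * (g x * radialLaplacian k x (u x) (u' x) (u'' x)))
      (uIoo α 1) := fun x hx ↦ by
    rw [uIoo_of_le hα] at hx
    simp only [u, u', u'', radialLaplacian_sub_rpow_mul k hx.1.ne']
    ring
  have integrable := (intervalIntegrable_sub_rpow_mul (b := a - 2) (by linarith)
    (by rw [uIcc_of_le hα]; unfold capRadialLaplacian; fun_prop)).congr_uIoo conjugate
  have symmetry :=
    integral_mul_radialLaplacian_comm k hα cu cu' du du' hu hu' cg cg' cg'' hg hg' integrable
  rw [← intervalIntegral.integral_congr_uIoo conjugate] at symmetry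
  convert symmetry using 3 <;> ring

theorem sphericalCap_weighted_laplacian_sparse_general (hα : α ≤ 1) (ha : 1 < a) (k n : ℕ)
    (cf : ContinuousOn f (Icc α 1)) (cf' : ContinuousOn f' (Icc α 1))
    (cf'' : ContinuousOn f'' (Icc α 1))
    (hf : ∀ x ∈ Ioo α 1, HasDerivAt f (f' x) x) (hf' : ∀ x ∈ Ioo α 1, HasDerivAt f' (f'' x) x)
    (horth : ∀ p : ℝ[X], p.degree < (n : WithBot ℕ) →
      ∫ x in α..1, f x * p.eval x * (x - α) ^ a * (1 - x ^ 2) ^ k = 0)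
    (S : ℝ[X]) (hS : S.degree < (n : WithBot ℕ)) :
    ∫ x in α..1, S.eval x * (x - α) ^ (a - 2) * (1 - x ^ 2) ^ k *
      capRadialLaplacian k a α x (f x) (f' x) (f'' x) = 0 := by
  rw [integral_mul_capRadialLaplacian k hα ha cf cf' cf'' hf hf' S.continuousOn
    (derivative S).continuousOn (derivative (derivative S)).continuousOn
    (fun x _ ↦ S.hasDerivAt x) (fun x _ ↦ (derivative S).hasDerivAt x)]
  simpa only [eval_radialLaplacian, eval_X] using
    horth _ ((degree_radialLaplacian_le k S).trans_lt hS)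

end Cap

/-- Sparsity of the weighted spherical Laplacian operator ℒ_W^{(a)→(a−ã)}: the radial coupling of Δ_S[(z−α)^a · f] against polynomials of degree at most n−1 vanishes. -/
theorem sphericalCap_weighted_laplacian_sparse (α a : ℝ) (hα : α ∈ Set.Ioo (-1 : ℝ) 1) (ha : 2 ≤ a) (k n : ℕ)
    (R : Polynomial ℝ) (hdeg : R.degree = n)
    (horth : ∀ p : Polynomial ℝ, p.degree < (n : WithBot ℕ) →
      ∫ x in α..1, R.eval x * p.eval x * (x - α) ^ a * (1 - x ^ 2) ^ k = 0)
    (S : Polynomial ℝ) (hS : S.degree + 1 ≤ (n : WithBot ℕ)) :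
    ∫ x in α..1, S.eval x * (x - α) ^ (a - 2) * (1 - x ^ 2) ^ k *
      (R.eval x * (-((k : ℝ) * ((k : ℝ) + 1)) * (x - α) ^ 2
          - 2 * a * ((k : ℝ) + 1) * x * (x - α) + a * (a - 1) * (1 - x ^ 2))
        + (derivative R).eval x * (-(2 * ((k : ℝ) + 1)) * x * (x - α) ^ 2
          + 2 * a * (x - α) * (1 - x ^ 2))
        + (derivative (derivative R)).eval x * (x - α) ^ 2 * (1 - x ^ 2)) = 0 :=
  sphericalCap_weighted_laplacian_sparse_general hα.2.le (by linarith) k n R.continuousOn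
    (derivative R).continuousOn (derivative (derivative R)).continuousOn
    (fun x _ ↦ R.hasDerivAt x) (fun x _ ↦ (derivative R).hasDerivAt x) horth S
    (lt_of_add_lt_add_right (hS.trans_lt (by exact_mod_cast n.lt_succ_self)))
end
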